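/- arXiv:nlin/0403023 — 11 statements merged into one kernel-verified Lean document; each statement's English description precedes it below -/
import Mathlib

section
/- Let g be a Lie algebra over a field K with a symmetric invariant bilinear form ⟨·,·⟩ (i.e. ⟨[a,b],c⟩ = ⟨a,[b,c]⟩ for all a,b,c), and let U be a Lie subalgebra of g such that g = U ⊕ U^⊥ as vector spaces, with projection π of g onto U along U^⊥. If L ∈ U and f ∈ g satisfy [f,L] = 0, then [π(f), L] = 0. -/
section Projection

variable {R G : Type*} [CommRing R] [LieRing G] [LieAlgebra R G]

theorem lie_mem_orthogonalBilin_flip {M : Type*} [AddCommMonoid M] [Module R M]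
    {B : G →ₗ[R] G →ₗ[R] M} (hinv : ∀ a b c : G, B ⁅a, b⁆ c = B a ⁅b, c⁆)
    {U : LieSubalgebra R G} {w u : G} (hw : w ∈ U.toSubmodule.orthogonalBilin B.flip)
    (hu : u ∈ U) : ⁅w, u⁆ ∈ U.toSubmodule.orthogonalBilin B.flip := by
  intro v hv
  calc
    B ⁅w, u⁆ v = B w ⁅u, v⁆ := hinv w u v
    _ = 0 := hw _ (U.lie_mem hu hv)

theorem projection_lie_eq_lie_projection {U : LieSubalgebra R G} {W : Submodule R G}
    (hUW : Disjoint U.toSubmodule W) {π : G → G} (hπU : ∀ x, π x ∈ U)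
    (hπW : ∀ x, x - π x ∈ W) {u : G} (hu : u ∈ U) (hWu : ∀ w ∈ W, ⁅w, u⁆ ∈ W) (x : G) :
    π ⁅x, u⁆ = ⁅π x, u⁆ := by
  have mem_U : π ⁅x, u⁆ - ⁅π x, u⁆ ∈ U := sub_mem (hπU _) (U.lie_mem (hπU x) hu)
  have mem_W : π ⁅x, u⁆ - ⁅π x, u⁆ ∈ W := by
    have h_eq : π ⁅x, u⁆ - ⁅π x, u⁆ = ⁅x - π x, u⁆ - (⁅x, u⁆ - π ⁅x, u⁆) := by
      rw [sub_lie]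
      abel
    rw [h_eq]
    exact sub_mem (hWu _ (hπW x)) (hπW _)
  exact sub_eq_zero.mp (Submodule.disjoint_def.mp hUW _ mem_U mem_W)

theorem stmt2_general {M : Type*} [AddCommMonoid M] [Module R M]
    {B : G →ₗ[R] G →ₗ[R] M} (hinv : ∀ a b c : G, B ⁅a, b⁆ c = B a ⁅b, c⁆)
    {U : LieSubalgebra R G}
    (hdisj : Disjoint U.toSubmodule (U.toSubmodule.orthogonalBilin B.flip))
    {π : G → G} (hπU : ∀ x, π x ∈ U)
    (hπperp : ∀ x, x - π x ∈ U.toSubmodule.orthogonalBilin B.flip)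
    {L : G} (hL : L ∈ U) (f : G) : π ⁅f, L⁆ = ⁅π f, L⁆ :=
  projection_lie_eq_lie_projection hdisj hπU hπperp hL
    (fun _ hw => lie_mem_orthogonalBilin_flip hinv hw hL) f

end Projection

/-- let `g` be a Lie algebra with a symmetric invariant bilinear form,
`U` a Lie subalgebra with `g = U ⊕ U^⊥` as vector spaces, and `π` the projection
onto `U` along `U^⊥`. If `L ∈ U` and `⁅f, L⁆ = 0`, then `⁅π f, L⁆ = 0`. -/
theorem stmt2 {K G : Type*} [Field K] [LieRing G] [LieAlgebra K G]
    (B : G →ₗ[K] G →ₗ[K] K)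
    (hsymm : ∀ a b : G, B a b = B b a)
    (hinv : ∀ a b c : G, B ⁅a, b⁆ c = B a ⁅b, c⁆)
    (U : LieSubalgebra K G)
    (π : G →ₗ[K] G)
    (hπU : ∀ x : G, π x ∈ U)
    (hπperp : ∀ x : G, ∀ u ∈ U, B (x - π x) u = 0)
    (hdisj : ∀ x ∈ U, (∀ u ∈ U, B x u = 0) → x = 0)
    (L f : G) (hL : L ∈ U) (hf : ⁅f, L⁆ = 0) :
    ⁅π f, L⁆ = 0 := by
  rw [← stmt2_general hinv (Submodule.disjoint_def.mpr hdisj) hπU hπperp hL f, hf, map_zero]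
end

section
/- Let A be an associative unital algebra over a field K with a symmetric bilinear form ⟨·,·⟩ satisfying ⟨a, b⋆c⟩ = ⟨a⋆b, c⟩ for all a,b,c ∈ A, and let U be a Lie subalgebra of the commutator Lie algebra A⁽⁻⁾ such that A = U ⊕ U^⊥ as vector spaces, with projection π of A onto U along U^⊥. Let L ∈ U, let f ∈ A satisfy f⋆L = L⋆f, and let g belong to the unital associative subalgebra of A generated by L together with the center of A. Then [π(f), π(g)] = 0; that is, any two spectral invariants of L commute. -/
/-!
Invariance of the form makes `U^⊥` stable under `ad u` for every `u ∈ U`, so `π` commutes with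
`ad u`. For `u = L` this gives `[L, π f] = π [L, f] = 0`. Everything that commutes with `L` commutes
with `g`, in particular `π f` does. As `π f ∈ U`, the same equivariance, now for `u = π f`, gives
`[π f, π g] = π [π f, g] = 0`.
-/

lemma projection_eq_of_mem_of_sub_mem {R M : Type*} [Ring R] [AddCommGroup M] [Module R M]
    {p q : Submodule R M} (h : IsCompl p q) {x y : M} (hy : y ∈ p) (hxy : x - y ∈ q) :
    p.projection q h x = y := by
  rw [← sub_add_cancel x y, map_add, Submodule.projection_apply_of_mem_right h hxy,
    Submodule.projection_apply_of_mem_left h hy, zero_add]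

lemma projection_lie {R 𝔤 M : Type*} [CommRing R] [LieRing 𝔤] [AddCommGroup M] [Module R M]
    [LieRingModule 𝔤 M] {N N' : LieSubmodule R 𝔤 M}
    (h : IsCompl N.toSubmodule N'.toSubmodule) (x : 𝔤) (m : M) :
    N.toSubmodule.projection N'.toSubmodule h ⁅x, m⁆ =
      ⁅x, N.toSubmodule.projection N'.toSubmodule h m⁆ := by
  refine projection_eq_of_mem_of_sub_mem h (N.lie_mem (Submodule.projection_apply_mem h m)) ?_
  rw [← lie_sub]
  exact N'.lie_mem (Submodule.sub_projection_mem h m)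

lemma exists_isCompl_orthogonal_eq_projection {R M : Type*} [CommRing R] [AddCommGroup M]
    [Module R M] {B : LinearMap.BilinForm R M} (hB : B.IsRefl) {p : Submodule R M}
    {π : M →ₗ[R] M} (hp : ∀ x, π x ∈ p) (hπ : ∀ x, ∀ y ∈ p, B (x - π x) y = 0)
    (hdisj : ∀ x ∈ p, (∀ y ∈ p, B x y = 0) → x = 0) :
    ∃ h : IsCompl p (B.orthogonal p), π = p.projection (B.orthogonal p) h := by
  have hsub (x : M) : x - π x ∈ B.orthogonal p := fun y hy ↦ hB _ _ (hπ x y hy)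
  have h : IsCompl p (B.orthogonal p) :=
    ⟨Submodule.disjoint_def.mpr fun x hx hx' ↦ hdisj x hx fun y hy ↦ hB _ _ (hx' y hy),
      Submodule.codisjoint_iff_exists_add_eq.mpr fun x ↦
        ⟨π x, x - π x, hp x, hsub x, add_sub_cancel (π x) x⟩⟩
  exact ⟨h, LinearMap.ext fun x ↦ (projection_eq_of_mem_of_sub_mem h (hp x) (hsub x)).symm⟩

section Associative

attribute [local instance 100] LieRing.ofAssociativeRing

variable {R A : Type*} [CommRing R] [Ring A]

lemma lieInvariant_of_isSymm_of_assoc [Module R A] {B : LinearMap.BilinForm R A}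
    (hsymm : B.IsSymm) (hassoc : ∀ a b c : A, B a (b * c) = B (a * b) c) :
    B.lieInvariant A := by
  intro x y z
  have hxy : B (x * y) z = B y (z * x) := by rw [hsymm.eq, hassoc, hsymm.eq]
  rw [LieRing.of_associative_ring_bracket, LieRing.of_associative_ring_bracket, map_sub, map_sub,
    LinearMap.sub_apply, hxy, hassoc y x z, neg_sub]

lemma adjoin_union_center_le_centralizer_centralizer [Algebra R A] (s : Set A) :
    Algebra.adjoin R (s ∪ Set.center A) ≤ Subalgebra.centralizer R s.centralizer :=
  Algebra.adjoin_le <| Set.union_subset Set.subset_centralizer_centralizer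
    (Set.center_subset_centralizer _)

lemma lie_eq_zero_of_mem_adjoin_insert_center [Algebra R A] {a b x : A}
    (hb : b ∈ Algebra.adjoin R (insert a (Set.center A))) (hx : ⁅a, x⁆ = 0) : ⁅x, b⁆ = 0 := by
  have hxa : x ∈ Set.centralizer {a} := by
    rintro _ rfl
    exact sub_eq_zero.mp hx
  exact sub_eq_zero.mpr (adjoin_union_center_le_centralizer_centralizer {a} hb x hxa)

end Associative

/- `𝔤 = U ⊕ 𝔪` is a reductive decomposition, `[U, 𝔪] ⊆ 𝔪`; the orthogonal complement of `U` for an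
invariant form is one choice of `𝔪`. -/
theorem stmt3_general {R 𝔤 : Type*} [CommRing R] [LieRing 𝔤] [LieAlgebra R 𝔤]
    {U : LieSubalgebra R 𝔤} {𝔪 : LieSubmodule R U 𝔤}
    (h : IsCompl U.toSubmodule 𝔪.toSubmodule) {L f g : 𝔤} (hL : L ∈ U) (hf : ⁅L, f⁆ = 0)
    (hg : ∀ x : 𝔤, ⁅L, x⁆ = 0 → ⁅x, g⁆ = 0) :
    ⁅U.toSubmodule.projection 𝔪.toSubmodule h f,
      U.toSubmodule.projection 𝔪.toSubmodule h g⁆ = 0 := by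
  set π := U.toSubmodule.projection 𝔪.toSubmodule h
  have π_lie {u : 𝔤} (hu : u ∈ U) (x : 𝔤) : π ⁅u, x⁆ = ⁅u, π x⁆ :=
    projection_lie (N := U.toLieSubmodule) h ⟨u, hu⟩ x
  have hLf : ⁅L, π f⁆ = 0 := by rw [← π_lie hL, hf, map_zero]
  rw [← π_lie (Submodule.projection_apply_mem h f), hg _ hLf, map_zero]

/-- let `A` be an associative unital algebra with a symmetric
semi-Frobenius bilinear form, `U` a Lie subalgebra of the commutator Lie algebra
`A⁽⁻⁾` with `A = U ⊕ U^⊥` as vector spaces and projection `π` onto `U` along `U^⊥`.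
If `L ∈ U`, `f` commutes with `L`, and `g` lies in the unital associative
subalgebra generated by `L` and the center of `A`, then the spectral invariants
`π f` and `π g` commute: `π f * π g - π g * π f = 0`. -/
theorem stmt3 {K A : Type*} [Field K] [Ring A] [Algebra K A]
    (B : A →ₗ[K] A →ₗ[K] K)
    (hsymm : ∀ a b : A, B a b = B b a)
    (hfrob : ∀ a b c : A, B a (b * c) = B (a * b) c)
    (U : Submodule K A)
    (hU : ∀ a ∈ U, ∀ b ∈ U, a * b - b * a ∈ U)
    (π : A →ₗ[K] A)
    (hπU : ∀ x : A, π x ∈ U)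
    (hπperp : ∀ x : A, ∀ u ∈ U, B (x - π x) u = 0)
    (hdisj : ∀ x ∈ U, (∀ u ∈ U, B x u = 0) → x = 0)
    (L f g : A) (hL : L ∈ U) (hf : f * L = L * f)
    (hg : g ∈ Algebra.adjoin K (insert L (Set.center A))) :
    π f * π g - π g * π f = 0 := by
  let _ : LieRing A := LieRing.ofAssociativeRing
  let 𝔲 : LieSubalgebra K A := { U with lie_mem' := fun ha hb ↦ hU _ ha _ hb }
  obtain ⟨h, rfl⟩ := exists_isCompl_orthogonal_eq_projection (B := B)
    (fun a b hab ↦ (hsymm b a).trans hab) hπU hπperp hdisj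
  have hB : LinearMap.BilinForm.lieInvariant 𝔲 B :=
    fun u ↦ lieInvariant_of_isSymm_of_assoc ⟨hsymm⟩ hfrob u
  exact stmt3_general (𝔪 := LieAlgebra.InvariantForm.orthogonal B hB 𝔲.toLieSubmodule) h hL
    (sub_eq_zero.mpr hf.symm) fun x ↦ lie_eq_zero_of_mem_adjoin_insert_center hg
end

section
/- (Theorem 1) Let U be a Lie algebra over a field K with a symmetric invariant bilinear form ⟨·,·⟩ (i.e. ⟨[a,b],c⟩ = ⟨a,[b,c]⟩). Suppose U = U₊ ⊕ U₋ as vector spaces, where U₊ and U₋ are Lie subalgebras, with projections π₊, π₋. Let I₊ be a Lie ideal of U₊, I₋ a Lie ideal of U₋, and set O = {x ∈ U : ⟨x,y⟩ = 0 for all y ∈ I₊ and all y ∈ I₋}. Then for every L ∈ O and every h ∈ U with [h,L] = 0, the element [π₊(h), L] again belongs to O; in other words, O is invariant under the Lax flow L_t = [π₊(h), L]. -/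
/-!
For an invariant form, each `ad a` is skew-adjoint, so it preserves the orthogonal complement of
every subspace stable under `ad a`. Hence `ad (π₊ h)` preserves `I₊^⊥`, and `ad (π₋ h)` preserves
`I₋^⊥`. Since `⁅h, L⁆ = 0`, the flow has the two expressions `⁅π₊ h, L⁆ = -⁅π₋ h, L⁆`; the first
lies in `I₊^⊥` and the second in `I₋^⊥`.
-/

open LinearMap (BilinForm)

theorem lieInvariant_of_apply_lie_eq {R L : Type*} [CommRing R] [LieRing L] [LieAlgebra R L]
    {Φ : BilinForm R L} (hΦ : ∀ a b c : L, Φ ⁅a, b⁆ c = Φ a ⁅b, c⁆) : Φ.lieInvariant L := by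
  intro x y z
  rw [← lie_skew, map_neg, LinearMap.neg_apply, hΦ]

section LieRingModule

variable {R L M : Type*} [CommRing R] [LieRing L] [AddCommGroup M] [Module R M]
  [LieRingModule L M] {Φ : BilinForm R M}

theorem lieInvariant_flip (hΦ : Φ.lieInvariant L) : Φ.flip.lieInvariant L := by
  intro x y z
  rw [BilinForm.flip_apply, BilinForm.flip_apply, hΦ, neg_neg]

theorem lie_mem_orthogonal (hΦ : Φ.lieInvariant L) {N : Submodule R M} {a : L}
    (ha : ∀ y ∈ N, ⁅a, y⁆ ∈ N) {x : M} (hx : x ∈ Φ.orthogonal N) : ⁅a, x⁆ ∈ Φ.orthogonal N := by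
  intro y hy
  rw [← neg_eq_zero, ← hΦ]
  exact hx _ (ha y hy)

theorem stmt4_general (hΦ : Φ.lieInvariant L) {N₁ N₂ : Submodule R M} {a b : L} {x : M}
    (ha : ∀ y ∈ N₁, ⁅a, y⁆ ∈ N₁) (hb : ∀ y ∈ N₂, ⁅b, y⁆ ∈ N₂)
    (hx : x ∈ Φ.orthogonal N₁ ⊓ Φ.orthogonal N₂) (hab : ⁅a + b, x⁆ = 0) :
    ⁅a, x⁆ ∈ Φ.orthogonal N₁ ⊓ Φ.orthogonal N₂ := by
  have hlax : ⁅a, x⁆ = -⁅b, x⁆ := by rwa [add_lie, add_eq_zero_iff_eq_neg] at hab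
  refine ⟨lie_mem_orthogonal hΦ ha hx.1, ?_⟩
  rw [hlax]
  exact neg_mem (lie_mem_orthogonal hΦ hb hx.2)

end LieRingModule

/-- Theorem 1: let `U` be a Lie algebra with a symmetric invariant
bilinear form and a vector-space decomposition `U = U₊ ⊕ U₋` into Lie subalgebras,
with projections `π₊`, `π₋`.  Let `I₊ ⊆ U₊`, `I₋ ⊆ U₋` be Lie ideals of `U₊`
and `U₋` respectively, and let `O = I₊^⊥ ∩ I₋^⊥`.  If `L ∈ O` and `⁅h, L⁆ = 0`,
then `⁅π₊ h, L⁆ ∈ O`: the orbit is invariant under the Lax flow. -/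
theorem stmt4 {K G : Type*} [Field K] [LieRing G] [LieAlgebra K G]
    (B : G →ₗ[K] G →ₗ[K] K)
    (hsymm : ∀ a b : G, B a b = B b a)
    (hinv : ∀ a b c : G, B ⁅a, b⁆ c = B a ⁅b, c⁆)
    (Up Um : LieSubalgebra K G)
    (πp πm : G →ₗ[K] G)
    (hπp : ∀ x : G, πp x ∈ Up) (hπm : ∀ x : G, πm x ∈ Um)
    (hdecomp : ∀ x : G, πp x + πm x = x)
    (hdisj : ∀ x : G, x ∈ Up → x ∈ Um → x = 0)
    (Ip Im : Submodule K G)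
    (hIpU : (Ip : Set G) ⊆ (Up : Set G)) (hImU : (Im : Set G) ⊆ (Um : Set G))
    (hIp : ∀ a ∈ Up, ∀ y ∈ Ip, ⁅a, y⁆ ∈ Ip)
    (hIm : ∀ a ∈ Um, ∀ y ∈ Im, ⁅a, y⁆ ∈ Im)
    (L h : G)
    (hL : (∀ y ∈ Ip, B L y = 0) ∧ (∀ y ∈ Im, B L y = 0))
    (hcomm : ⁅h, L⁆ = 0) :
    (∀ y ∈ Ip, B ⁅πp h, L⁆ y = 0) ∧ (∀ y ∈ Im, B ⁅πp h, L⁆ y = 0) :=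
  -- `BilinForm.orthogonal` puts the subspace in the left argument, the orbit in the right one.
  stmt4_general (Φ := BilinForm.flip B) (lieInvariant_flip (lieInvariant_of_apply_lie_eq hinv))
    (hIp _ (hπp h)) (hIm _ (hπm h)) hL (by rw [hdecomp, hcomm])
end

section
/- (Theorem 2, algebraic form) Let U be a Lie algebra over a field K which, as a vector space, decomposes as U = U₊ ⊕ U₋, where U₊ and U₋ are Lie subalgebras; let π₊ denote the projection onto U₊ along U₋. Then for all a, b, L ∈ U with [a, b] = 0: [π₊([π₊(b), a]), L] + [π₊(a), [π₊(b), L]] = [π₊([π₊(a), b]), L] + [π₊(b), [π₊(a), L]]. (This expresses that the mixed second derivatives L_{tτ} and L_{τt} along the two Lax flows L_t = [π₊(a), L] and L_τ = [π₊(b), L], with a and b evolving by the same flows, coincide, so the flows commute.) -/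
/-!
By the Jacobi identity, the two mixed derivatives agree as soon as the zero-curvature equation
`⁅π₊ a, π₊ b⁆ = π₊ ⁅π₊ a, b⁆ - π₊ ⁅π₊ b, a⁆` holds. For commuting `a` and `b` this is the
Rota–Baxter identity of `π₊`, which in turn comes from the observation that
`⁅π₊ a, b⁆ + ⁅a, π₊ b⁆ - ⁅a, b⁆ = ⁅π₊ a, π₊ b⁆ - ⁅a - π₊ a, b - π₊ b⁆`
is a decomposition of the left-hand side along `U₊ ⊕ U₋`.
-/

theorem eq_of_sub_mem_of_disjoint {R E : Type*} [Ring R] [AddCommGroup E] [Module R E]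
    {p q : Submodule R E} (hpq : Disjoint p q) {x y z : E} (hy : y ∈ p) (hz : z ∈ p)
    (hxy : x - y ∈ q) (hxz : x - z ∈ q) : y = z := by
  have hq : y - z ∈ q := by simpa only [sub_sub_sub_cancel_left] using sub_mem hxz hxy
  exact sub_eq_zero.mp (Submodule.disjoint_def.mp hpq _ (sub_mem hy hz) hq)

section RotaBaxter

variable {K G : Type*} [CommRing K] [LieRing G] [LieAlgebra K G]

/-- `P` is a Rota–Baxter operator of weight `c` on the Lie algebra `G`. The sign of `c` is chosen
such that projections along a decomposition into two subalgebras have weight `-1`. -/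
def IsRotaBaxter (c : K) (P : G →ₗ[K] G) : Prop :=
  ∀ x y : G, ⁅P x, P y⁆ = P (⁅P x, y⁆ + ⁅x, P y⁆ + c • ⁅x, y⁆)

theorem isRotaBaxter_neg_one_of_disjoint {Up Um : LieSubalgebra K G} {P : G →ₗ[K] G}
    (hp : ∀ x, P x ∈ Up) (hm : ∀ x, x - P x ∈ Um)
    (hdisj : Disjoint Up.toSubmodule Um.toSubmodule) : IsRotaBaxter (-1) P := by
  intro x y
  have decomp : ⁅P x, y⁆ + ⁅x, P y⁆ + (-1 : K) • ⁅x, y⁆ - ⁅P x, P y⁆ =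
      -⁅x - P x, y - P y⁆ := by
    simp only [sub_lie, lie_sub, neg_one_smul]
    abel
  refine eq_of_sub_mem_of_disjoint hdisj (Up.lie_mem (hp x) (hp y)) (hp _) ?_ (hm _)
  rw [decomp]
  exact neg_mem (Um.lie_mem (hm x) (hm y))

theorem IsRotaBaxter.lie_apply_apply_of_apply_lie_eq_zero {c : K} {P : G →ₗ[K] G}
    (hP : IsRotaBaxter c P) {a b : G} (hab : P ⁅a, b⁆ = 0) :
    ⁅P a, P b⁆ = P ⁅P a, b⁆ - P ⁅P b, a⁆ := by
  rw [hP a b, map_add, map_add, map_smul, hab, smul_zero, add_zero, ← lie_skew a (P b), map_neg,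
    sub_eq_add_neg]

theorem stmt6_general {M : Type*} [AddCommGroup M] [LieRingModule G M] {c : K} {P : G →ₗ[K] G}
    (hP : IsRotaBaxter c P) {a b : G} (hab : P ⁅a, b⁆ = 0) (m : M) :
    ⁅P ⁅P b, a⁆, m⁆ + ⁅P a, ⁅P b, m⁆⁆ = ⁅P ⁅P a, b⁆, m⁆ + ⁅P b, ⁅P a, m⁆⁆ := by
  have curvature : ⁅P a, P b⁆ + P ⁅P b, a⁆ = P ⁅P a, b⁆ :=
    eq_sub_iff_add_eq.mp (hP.lie_apply_apply_of_apply_lie_eq_zero hab)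
  rw [← curvature, add_lie, leibniz_lie (P a) (P b) m]
  abel

end RotaBaxter

/-- Theorem 2, algebraic form: let `U` be a Lie algebra decomposing
as a vector space as `U = U₊ ⊕ U₋` where `U₊`, `U₋` are Lie subalgebras, with
projection `π₊` onto `U₊` along `U₋`.  Then for all `a b L` with `⁅a, b⁆ = 0`:
`⁅π₊⁅π₊ b, a⁆, L⁆ + ⁅π₊ a, ⁅π₊ b, L⁆⁆ = ⁅π₊⁅π₊ a, b⁆, L⁆ + ⁅π₊ b, ⁅π₊ a, L⁆⁆`,
i.e. the two Lax flows commute. -/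
theorem stmt6 {K G : Type*} [Field K] [LieRing G] [LieAlgebra K G]
    (Up Um : LieSubalgebra K G)
    (πp : G →ₗ[K] G)
    (hπp : ∀ x : G, πp x ∈ Up)
    (hπm : ∀ x : G, x - πp x ∈ Um)
    (hdisj : ∀ x : G, x ∈ Up → x ∈ Um → x = 0) :
    ∀ a b L : G, ⁅a, b⁆ = 0 →
      ⁅πp ⁅πp b, a⁆, L⁆ + ⁅πp a, ⁅πp b, L⁆⁆
        = ⁅πp ⁅πp a, b⁆, L⁆ + ⁅πp b, ⁅πp a, L⁆⁆ := by
  have hRB := isRotaBaxter_neg_one_of_disjoint hπp hπm (Submodule.disjoint_def.mpr hdisj)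
  exact fun _ _ L hab ↦ stmt6_general hRB (by rw [hab, map_zero]) L
end

section
/- (Theorem 3, part i — involutivity) Let U be a Lie algebra over a field K with a symmetric invariant bilinear form ⟨·,·⟩ (i.e. ⟨[a,b],c⟩ = ⟨a,[b,c]⟩). Suppose U = U₊ ⊕ U₋ as vector spaces, where U₊ and U₋ are Lie subalgebras, with projections π₊, π₋. Then for all a, b, L ∈ U with [a, L] = 0 and [b, L] = 0: ⟨[π₊(a), π₊(b)] − [π₋(a), π₋(b)], L⟩ = 0. (This is the vanishing of the Kirillov Poisson bracket of the two Hamiltonians H_a and H_b, so the spectral invariants are in involution.) -/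
lemma lie_sub_lie_eq_lie_add_sub_add_lie {L M : Type*} [LieRing L] [AddCommGroup M]
    [LieRingModule L M] (x₁ x₂ : L) (y₁ y₂ : M) :
    ⁅x₁, y₁⁆ - ⁅x₂, y₂⁆ = ⁅x₁, y₁ + y₂⁆ - ⁅x₁ + x₂, y₂⁆ := by
  rw [lie_add, add_lie]
  abel

lemma apply_lie_left_eq_zero_of_lie_eq_zero {R L M : Type*} [CommRing R] [LieRing L]
    [AddCommGroup M] [Module R M] [LieRingModule L M] {B : LinearMap.BilinForm R M}
    (hB : B.lieInvariant L) {x : L} {z : M} (hxz : ⁅x, z⁆ = 0) (y : M) :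
    B ⁅x, y⁆ z = 0 := by
  rw [hB, hxz, map_zero, neg_zero]

section LieRing

variable {R G : Type*} [CommRing R] [LieRing G] [Module R G] {B : LinearMap.BilinForm R G}

lemma lieInvariant_iff_apply_lie_eq_apply_lie :
    B.lieInvariant G ↔ ∀ x y z : G, B ⁅x, y⁆ z = B x ⁅y, z⁆ := by
  have skew (x y z : G) : B ⁅x, y⁆ z = -B ⁅y, x⁆ z := by
    rw [← lie_skew, map_neg, LinearMap.neg_apply]
  constructor
  · intro hB x y z
    rw [skew, hB, neg_neg]
  · intro hB x y z
    rw [skew, hB]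

lemma apply_lie_right_eq_zero_of_lie_eq_zero (hB : B.lieInvariant G) {y z : G}
    (hyz : ⁅y, z⁆ = 0) (x : G) : B ⁅x, y⁆ z = 0 := by
  rw [lieInvariant_iff_apply_lie_eq_apply_lie.mp hB, hyz, map_zero]

theorem stmt7_general (hB : B.lieInvariant G) {a₁ a₂ b₁ b₂ z : G}
    (ha : ⁅a₁ + a₂, z⁆ = 0) (hb : ⁅b₁ + b₂, z⁆ = 0) :
    B (⁅a₁, b₁⁆ - ⁅a₂, b₂⁆) z = 0 := by
  have hb₀ : B ⁅a₁, b₁ + b₂⁆ z = 0 := apply_lie_right_eq_zero_of_lie_eq_zero hB hb a₁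
  have ha₀ : B ⁅a₁ + a₂, b₂⁆ z = 0 := apply_lie_left_eq_zero_of_lie_eq_zero hB ha b₂
  rw [lie_sub_lie_eq_lie_add_sub_add_lie, map_sub, LinearMap.sub_apply, hb₀, ha₀, sub_zero]

end LieRing

/-- Theorem 3, part i — involutivity: let `U` be a Lie algebra with
a symmetric invariant bilinear form, decomposing as a vector space as
`U = U₊ ⊕ U₋` with Lie subalgebras `U₊`, `U₋` and projections `π₊`, `π₋`.
Then for all `a b L` with `⁅a, L⁆ = 0` and `⁅b, L⁆ = 0`:
`⟨⁅π₊ a, π₊ b⁆ − ⁅π₋ a, π₋ b⁆, L⟩ = 0`. -/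
theorem stmt7 {K G : Type*} [Field K] [LieRing G] [LieAlgebra K G]
    (B : G →ₗ[K] G →ₗ[K] K)
    (hsymm : ∀ a b : G, B a b = B b a)
    (hinv : ∀ a b c : G, B ⁅a, b⁆ c = B a ⁅b, c⁆)
    (Up Um : LieSubalgebra K G)
    (πp πm : G →ₗ[K] G)
    (hπp : ∀ x : G, πp x ∈ Up) (hπm : ∀ x : G, πm x ∈ Um)
    (hdecomp : ∀ x : G, πp x + πm x = x)
    (hdisj : ∀ x : G, x ∈ Up → x ∈ Um → x = 0) :
    ∀ a b L : G, ⁅a, L⁆ = 0 → ⁅b, L⁆ = 0 →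
      B (⁅πp a, πp b⁆ - ⁅πm a, πm b⁆) L = 0 := by
  intro a b L ha hb
  exact stmt7_general (lieInvariant_iff_apply_lie_eq_apply_lie.mpr hinv)
    (by rwa [hdecomp]) (by rwa [hdecomp])
end

section
/- (Theorem 3, part ii — Hamiltonian form of the Lax equation) Let U be a Lie algebra over a field K with a symmetric invariant bilinear form ⟨·,·⟩ (i.e. ⟨[a,b],c⟩ = ⟨a,[b,c]⟩). Suppose U = U₊ ⊕ U₋ as vector spaces, where U₊ and U₋ are Lie subalgebras, with projections π₊, π₋. Then for all a, b, L ∈ U with [b, L] = 0: ⟨a, [π₊(b), L]⟩ = ⟨[π₊(a), π₊(b)] − [π₋(a), π₋(b)], L⟩. (This identity shows that the Lax vector field L ↦ [π₊(b), L] is the Hamiltonian vector field of H_b with respect to the Kirillov bracket.) -/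
/-! Invariance moves `b` across the pairing, turning the right-hand side into
`⟨π₊ a, ⁅π₊ b, L⁆⟩ - ⟨π₋ a, ⁅π₋ b, L⁆⟩`. Since `b` annihilates `L`, its two components act on `L`
with opposite signs, so the difference recombines to `⟨a, ⁅π₊ b, L⁆⟩`. The argument applies to any
invariant pairing of a Lie ring `G` with a `G`-module, such as the canonical pairing of a Lie
algebra with its coadjoint module. -/

section LieRing

variable {G M A : Type*} [LieRing G] [AddCommGroup M] [LieRingModule G M] [AddCommGroup A]

theorem lie_eq_neg_lie_of_add_lie_eq_zero {x y : G} {m : M} (h : ⁅x + y, m⁆ = 0) :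
    ⁅y, m⁆ = -⁅x, m⁆ :=
  eq_neg_of_add_eq_zero_right ((add_lie x y m).symm.trans h)

theorem stmt8_general (B : G →+ M →+ A) (hinv : ∀ x y m, B ⁅x, y⁆ m = B x ⁅y, m⁆)
    {a a₁ a₂ b b₁ b₂ : G} (ha : a₁ + a₂ = a) (hb : b₁ + b₂ = b) {m : M} (hbm : ⁅b, m⁆ = 0) :
    B a ⁅b₁, m⁆ = B (⁅a₁, b₁⁆ - ⁅a₂, b₂⁆) m := by
  have hlie : ⁅b₂, m⁆ = -⁅b₁, m⁆ := lie_eq_neg_lie_of_add_lie_eq_zero (hb ▸ hbm)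
  symm
  calc
    B (⁅a₁, b₁⁆ - ⁅a₂, b₂⁆) m = B a₁ ⁅b₁, m⁆ - B a₂ ⁅b₂, m⁆ := by
      rw [map_sub, AddMonoidHom.sub_apply, hinv, hinv]
    _ = B a₁ ⁅b₁, m⁆ + B a₂ ⁅b₁, m⁆ := by
      rw [hlie, map_neg, sub_neg_eq_add]
    _ = B a ⁅b₁, m⁆ := by
      rw [← ha, map_add, AddMonoidHom.add_apply]

end LieRing

/-- Theorem 3, part ii — Hamiltonian form of the Lax equation:
let `U` be a Lie algebra with a symmetric invariant bilinear form, decomposing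
as a vector space as `U = U₊ ⊕ U₋` with Lie subalgebras `U₊`, `U₋` and
projections `π₊`, `π₋`.  Then for all `a b L` with `⁅b, L⁆ = 0`:
`⟨a, ⁅π₊ b, L⁆⟩ = ⟨⁅π₊ a, π₊ b⁆ − ⁅π₋ a, π₋ b⁆, L⟩`. -/
theorem stmt8 {K G : Type*} [Field K] [LieRing G] [LieAlgebra K G]
    (B : G →ₗ[K] G →ₗ[K] K)
    (hsymm : ∀ a b : G, B a b = B b a)
    (hinv : ∀ a b c : G, B ⁅a, b⁆ c = B a ⁅b, c⁆)
    (Up Um : LieSubalgebra K G)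
    (πp πm : G →ₗ[K] G)
    (hπp : ∀ x : G, πp x ∈ Up) (hπm : ∀ x : G, πm x ∈ Um)
    (hdecomp : ∀ x : G, πp x + πm x = x)
    (hdisj : ∀ x : G, x ∈ Up → x ∈ Um → x = 0) :
    ∀ a b L : G, ⁅b, L⁆ = 0 →
      B a ⁅πp b, L⁆ = B (⁅πp a, πp b⁆ - ⁅πm a, πm b⁆) L :=
  fun a b _ ↦ stmt8_general (LinearMap.toAddMonoidHom'.comp B.toAddMonoidHom) hinv
    (hdecomp a) (hdecomp b)
end

section
/- (Theorem 4, parts ii and iii, coefficientwise form) Let g be a Lie algebra over a field K, let (A_k)_{k ≥ 0} be a sequence of linear maps A_k : g → g with A₀ = id, set R = A₁, and let [·,·]₁ : g × g → g be a bilinear map. Suppose that for all X, Y ∈ g and all integers n ≥ 0: Σ_{i+j=n, i,j ≥ 0} [A_i(X), A_j(Y)] = A_n([X,Y]) + A_{n−1}([X,Y]₁), where A_{−1} = 0 (this is the coefficientwise form of the homogeneity condition [A(X), A(Y)] = A([X,Y] + λ[X,Y]₁)). Then: (a) [X,Y]₁ = [R(X), Y] + [X, R(Y)] − R([X,Y])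 for all X,Y ∈ g; (b) [·,·]₁ is skew-symmetric; and (c) for every t ∈ K, the bilinear operation (X,Y) ↦ [X,Y] + t·[X,Y]₁ satisfies the Jacobi identity, i.e. [·,·]₁ is a Lie bracket compatible with [·,·]. -/
/-!
The coefficient of `λ` in the homogeneity condition says that `[·,·]₁` is the Chevalley–Eilenberg
coboundary `δR` of `R` in the adjoint representation, so it is skew-symmetric and `δ² = 0` gives
the part of the Jacobi identity linear in `t`. The part quadratic in `t` is the Jacobi identity of
`δR` itself, whose defect is `δT` for `T` the Nijenhuis torsion of `R`. The coefficient of `λ²`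
says that `T = -δS`, so that this defect vanishes by `δ² = 0` once more.
-/

open LieModule.Cohomology

/-- The jacobiator of a binary operation: the cyclic sum which vanishes identically if and only
if the operation satisfies the Jacobi identity. The operation is an arbitrary function, so that
no linearity has to be bundled. -/
def jacobiator {L : Type*} [Add L] (b : L → L → L) (x y z : L) : L :=
  b (b x y) z + b (b y z) x + b (b z x) y

theorem jacobiator_lie {L : Type*} [LieRing L] (x y z : L) :
    jacobiator (fun u v : L ↦ ⁅u, v⁆) x y z = 0 := by
  rw [jacobiator, ← lie_skew ⁅x, y⁆ z, ← lie_skew ⁅y, z⁆ x, ← lie_skew ⁅z, x⁆ y]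
  linear_combination (norm := module) -lie_jacobi x y z

section

variable {K L : Type*} [CommRing K] [LieRing L] [LieAlgebra K L]

theorem d₂₃_apply_eq_neg_cyclic_sum (a : twoCochain K L L) (x y z : L) :
    d₂₃ K L L a x y z =
      -((⁅a x y, z⁆ + a ⁅x, y⁆ z) + (⁅a y z, x⁆ + a ⁅y, z⁆ x) + (⁅a z x, y⁆ + a ⁅z, x⁆ y)) := by
  rw [d₂₃_apply, ← twoCochain_skew a z x, ← lie_skew z x, map_neg, LinearMap.neg_apply,
    ← lie_skew x (a y z), ← lie_skew z (a x y), lie_neg, ← lie_skew (a z x) y]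
  abel

theorem jacobiator_lie_add_smul (a : twoCochain K L L) (t : K) (x y z : L) :
    jacobiator (fun u v ↦ ⁅u, v⁆ + t • a u v) x y z =
      t ^ 2 • jacobiator (fun u v ↦ a u v) x y z - t • d₂₃ K L L a x y z := by
  have hlie := jacobiator_lie x y z
  rw [d₂₃_apply_eq_neg_cyclic_sum]
  simp only [jacobiator, add_lie, smul_lie, map_add, map_smul, LinearMap.add_apply,
    LinearMap.smul_apply] at hlie ⊢
  linear_combination (norm := module) hlie

theorem d₁₂_mem_twoCocycle (R : L →ₗ[K] L) : d₁₂ K L L R ∈ twoCocycle K L L :=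
  (mem_twoCocycle_iff ..).2 (LinearMap.congr_fun (d₂₃_comp_d₁₂ K L L) R)

theorem d₁₂_adjoint_apply (R : L →ₗ[K] L) (x y : L) :
    d₁₂ K L L R x y = ⁅R x, y⁆ + ⁅x, R y⁆ - R ⁅x, y⁆ := by
  rw [d₁₂_apply_apply, ← lie_skew (R x) y]
  abel

/-- The Nijenhuis torsion `[Rx, Ry] - R([Rx, y] + [x, Ry] - R[x, y])` of a linear operator `R` on
a Lie algebra. It is bundled as a 2-cochain with values in the adjoint representation, in order
to take its coboundary. -/
def nijenhuisTorsion (R : L →ₗ[K] L) : twoCochain K L L where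
  val := (LieModule.toEnd K L L : L →ₗ[K] Module.End K L).compl₁₂ R R -
    (d₁₂ K L L R).val.compr₂ R
  property x := by simp

theorem nijenhuisTorsion_apply (R : L →ₗ[K] L) (x y : L) :
    nijenhuisTorsion R x y = ⁅R x, R y⁆ - R (d₁₂ K L L R x y) :=
  rfl

theorem jacobiator_d₁₂ (R : L →ₗ[K] L) (x y z : L) :
    jacobiator (fun u v ↦ d₁₂ K L L R u v) x y z = d₂₃ K L L (nijenhuisTorsion R) x y z := by
  have hterm (u v w : L) : d₁₂ K L L R (d₁₂ K L L R u v) w =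
      ⁅⁅R u, R v⁆, w⁆ + ⁅⁅R u, v⁆, R w⁆ + ⁅⁅u, R v⁆, R w⁆
        - R (⁅d₁₂ K L L R u v, w⁆ + d₁₂ K L L R ⁅u, v⁆ w)
        - (⁅nijenhuisTorsion R u v, w⁆ + nijenhuisTorsion R ⁅u, v⁆ w) := by
    have hlie : ⁅d₁₂ K L L R u v, R w⁆ = ⁅⁅R u, v⁆, R w⁆ + ⁅⁅u, R v⁆, R w⁆ - ⁅R ⁅u, v⁆, R w⁆ := by
      rw [d₁₂_adjoint_apply, sub_lie, add_lie]
    rw [d₁₂_adjoint_apply R (d₁₂ K L L R u v), hlie, nijenhuisTorsion_apply,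
      nijenhuisTorsion_apply, sub_lie, map_add]
    abel
  have hcocycle : R (d₂₃ K L L (d₁₂ K L L R) x y z) = 0 := by
    rw [(mem_twoCocycle_iff ..).1 (d₁₂_mem_twoCocycle R)]
    exact map_zero R
  have hxy := jacobiator_lie (R x) (R y) z
  have hyz := jacobiator_lie x (R y) (R z)
  have hzx := jacobiator_lie (R x) y (R z)
  rw [d₂₃_apply_eq_neg_cyclic_sum] at hcocycle ⊢
  simp only [jacobiator, hterm, map_neg, map_add] at hcocycle hxy hyz hzx ⊢
  linear_combination (norm := module) hxy + hyz + hzx + hcocycle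

theorem jacobiator_lie_add_smul_d₁₂ {R : L →ₗ[K] L}
    (hR : nijenhuisTorsion R ∈ twoCocycle K L L) (t : K) (x y z : L) :
    jacobiator (fun u v ↦ ⁅u, v⁆ + t • d₁₂ K L L R u v) x y z = 0 := by
  rw [jacobiator_lie_add_smul, jacobiator_d₁₂, (mem_twoCocycle_iff ..).1 hR,
    (mem_twoCocycle_iff ..).1 (d₁₂_mem_twoCocycle R)]
  simp

theorem nijenhuisTorsion_eq_d₁₂_neg {R S : L →ₗ[K] L}
    (hS : ∀ x y, ⁅x, S y⁆ + ⁅R x, R y⁆ + ⁅S x, y⁆ = S ⁅x, y⁆ + R (d₁₂ K L L R x y)) :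
    nijenhuisTorsion R = d₁₂ K L L (-S) := by
  refine DFunLike.ext _ _ fun x ↦ LinearMap.ext fun y ↦ ?_
  rw [nijenhuisTorsion_apply, d₁₂_adjoint_apply (-S)]
  simp only [LinearMap.neg_apply, neg_lie, lie_neg]
  linear_combination (norm := module) hS x y

end

theorem stmt12_general {K g : Type*} [CommRing K] [LieRing g] [LieAlgebra K g]
    (R S : g →ₗ[K] g) (br1 : g → g → g)
    (hR : ∀ X Y : g, ⁅X, R Y⁆ + ⁅R X, Y⁆ = R ⁅X, Y⁆ + br1 X Y)
    (hS : ∀ X Y : g, ⁅X, S Y⁆ + ⁅R X, R Y⁆ + ⁅S X, Y⁆ = S ⁅X, Y⁆ + R (br1 X Y)) :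
    (∀ X Y : g, br1 X Y = ⁅R X, Y⁆ + ⁅X, R Y⁆ - R ⁅X, Y⁆) ∧
    (∀ X Y : g, br1 X Y = -br1 Y X) ∧
    (∀ (t : K) (X Y Z : g), jacobiator (fun U V ↦ ⁅U, V⁆ + t • br1 U V) X Y Z = 0) := by
  obtain rfl : br1 = fun X Y ↦ d₁₂ K g g R X Y := by
    funext X Y
    rw [d₁₂_adjoint_apply]
    linear_combination (norm := module) -hR X Y
  have htorsion : nijenhuisTorsion R ∈ twoCocycle K g g :=
    nijenhuisTorsion_eq_d₁₂_neg hS ▸ d₁₂_mem_twoCocycle (-S)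
  exact ⟨d₁₂_adjoint_apply R, fun X Y ↦ (twoCochain_skew _ Y X).symm,
    jacobiator_lie_add_smul_d₁₂ htorsion⟩

/-- Theorem 4, parts ii and iii, coefficientwise form: let `g` be a
Lie algebra, `(A_k)` a sequence of linear maps with `A₀ = id`, and `[·,·]₁ = br1`
a bilinear map such that for all `X Y` and `n ≥ 0`
`∑_{i+j=n} ⁅A_i X, A_j Y⁆ = A_n ⁅X,Y⁆ + A_{n-1} (br1 X Y)` (with `A_{-1} = 0`).
Then (a) `br1 X Y = ⁅A₁ X, Y⁆ + ⁅X, A₁ Y⁆ − A₁ ⁅X,Y⁆`; (b) `br1` is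
skew-symmetric; (c) for every `t`, `(X,Y) ↦ ⁅X,Y⁆ + t • br1 X Y` satisfies the
Jacobi identity, i.e. `br1` is a Lie bracket compatible with `⁅·,·⁆`. -/
theorem stmt12 {K g : Type*} [Field K] [LieRing g] [LieAlgebra K g]
    (A : ℕ → (g →ₗ[K] g)) (hA0 : A 0 = LinearMap.id)
    (br1 : g →ₗ[K] g →ₗ[K] g)
    (hcond : ∀ (X Y : g) (n : ℕ),
      ∑ i ∈ Finset.range (n + 1), ⁅A i X, A (n - i) Y⁆
        = A n ⁅X, Y⁆ + if n = 0 then 0 else A (n - 1) (br1 X Y)) :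
    (∀ X Y : g, br1 X Y = ⁅A 1 X, Y⁆ + ⁅X, A 1 Y⁆ - A 1 ⁅X, Y⁆) ∧
    (∀ X Y : g, br1 X Y = - br1 Y X) ∧
    (∀ (t : K) (X Y Z : g),
      (⁅(⁅X, Y⁆ + t • br1 X Y), Z⁆ + t • br1 (⁅X, Y⁆ + t • br1 X Y) Z)
        + (⁅(⁅Y, Z⁆ + t • br1 Y Z), X⁆ + t • br1 (⁅Y, Z⁆ + t • br1 Y Z) X)
        + (⁅(⁅Z, X⁆ + t • br1 Z X), Y⁆ + t • br1 (⁅Z, X⁆ + t • br1 Z X) Y) = 0) := by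
  exact stmt12_general (A 1) (A 2) (fun X Y ↦ br1 X Y)
    (fun X Y ↦ by simpa [Finset.sum_range_succ, hA0] using hcond X Y 1)
    (fun X Y ↦ by simpa [Finset.sum_range_succ, hA0] using hcond X Y 2)
end

section
/- Let g be a Lie algebra over a field K with a nondegenerate symmetric invariant bilinear form κ (invariance: κ([a,b],c) = κ(a,[b,c])). Let R : g → g be a linear map admitting an adjoint Rᵗ : g → g, i.e. κ(R(x), y) = κ(x, Rᵗ(y)) for all x,y. Define [X,Y]₁ = [R(X), Y] + [X, R(Y)] − R([X,Y]) and X∗Y = [R(X), Y] − [X, Rᵗ(Y)] + Rᵗ([X,Y]). Then for all X, Y, Z ∈ g: κ(X∗Y, Z) = −κ(Y, [X,Z]₁); that is, X∗Y = −(ad₁ X)ᵗ(Y), so the operation ∗ is the coadjoint action of the Lie algebra (g, [·,·]₁) on (g, [·,·]). -/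
/- For an invariant form the action of each `X` is skew-adjoint, so taking adjoints turns the
commutator of the action of `X` with `S` into its commutator with `Sᵗ`, sign unchanged. The negative
adjoint of the action deformed by `S` is therefore the action deformed by `-Sᵗ`. Applied to the
adjoint representation and `S = R`, the former is `ad₁` and the latter is `∗`. -/

section DeformedAction

open LieModule LinearMap

variable {K L M : Type*} [CommRing K] [LieRing L] [LieAlgebra K L]
  [AddCommGroup M] [Module K M] [LieRingModule L M] [LieModule K L M]

theorem isSkewAdjoint_toEnd {κ : LinearMap.BilinForm K M} (hκ : κ.lieInvariant L) (X : L) :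
    κ.IsSkewAdjoint (toEnd K L M X) := fun m n => by
  simpa using hκ X m n

theorem lieInvariant_of_apply_lie_left_eq {κ : LinearMap.BilinForm K L}
    (hκ : ∀ a b c : L, κ ⁅a, b⁆ c = κ a ⁅b, c⁆) : κ.lieInvariant L := fun a b c => by
  rw [← lie_skew, LinearMap.BilinForm.neg_left, hκ]

theorem isAdjointPair_swap_of_isSymm {κ : LinearMap.BilinForm K M} (hκ : κ.IsSymm) {f g : M → M}
    (h : IsAdjointPair κ κ f g) : IsAdjointPair κ κ g f := fun m n => by
  rw [hκ.eq, ← h, hκ.eq]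

/-- The action of a Lie algebra `L` on a module `M` deformed by a map `R` on `L` and an endomorphism
`S` of `M`: the action of `R X` plus the commutator of the action of `X` with `S`. It puts `⁅·,·⁆₁`
and `∗` under one formula. No condition making it an action for a second Lie bracket on `L` is
imposed. -/
def deformedAction (R : L → L) (S : Module.End K M) (X : L) : Module.End K M :=
  toEnd K L M (R X) + (toEnd K L M X * S - S * toEnd K L M X)

theorem deformedAction_apply (R : L → L) (S : Module.End K M) (X : L) (m : M) :
    deformedAction R S X m = ⁅R X, m⁆ + ⁅X, S m⁆ - S ⁅X, m⁆ := by
  simp [deformedAction, add_sub_assoc]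

theorem deformedAction_neg_apply (R : L → L) (S : Module.End K M) (X : L) (m : M) :
    deformedAction R (-S) X m = ⁅R X, m⁆ - ⁅X, S m⁆ + S ⁅X, m⁆ := by
  simp [deformedAction_apply, sub_eq_add_neg]

theorem isAdjointPair_deformedAction {κ : LinearMap.BilinForm K M} (hκ : κ.lieInvariant L)
    {S St : Module.End K M} (hS : IsAdjointPair κ κ St S) (R : L → L) (X : L) :
    IsAdjointPair κ κ (deformedAction R (-St) X) (-deformedAction R S X : Module.End K M) := by
  have hact (W : L) : IsAdjointPair κ κ (toEnd K L M W) (-toEnd K L M W : Module.End K M) :=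
    isSkewAdjoint_toEnd hκ W
  have hS_neg : IsAdjointPair κ κ (-St : Module.End K M) (-S : Module.End K M) := by
    simpa using hS.smul (-1)
  have hcomm := ((hact X).mul hS_neg).sub (hS_neg.mul (hact X))
  have hneg : -deformedAction R S X = -toEnd K L M (R X) +
      (-S * -toEnd K L M X - -toEnd K L M X * -S) := by
    rw [deformedAction]
    noncomm_ring
  rw [hneg]
  exact (hact (R X)).add hcomm

theorem stmt13_general {κ : LinearMap.BilinForm K M} (hκ : κ.lieInvariant L)
    {S St : Module.End K M} (hS : IsAdjointPair κ κ St S) (R : L → L) (X : L) (Y Z : M) :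
    κ (⁅R X, Y⁆ - ⁅X, St Y⁆ + St ⁅X, Y⁆) Z = -κ Y (⁅R X, Z⁆ + ⁅X, S Z⁆ - S ⁅X, Z⁆) := by
  rw [← deformedAction_neg_apply, ← deformedAction_apply, isAdjointPair_deformedAction hκ hS,
    LinearMap.neg_apply, map_neg]

end DeformedAction

/-- let `g` be a Lie algebra with a nondegenerate symmetric
invariant bilinear form `κ`, and `R` a linear map with adjoint `Rᵗ`.  With
`⁅X,Y⁆₁ = ⁅R X, Y⁆ + ⁅X, R Y⁆ − R ⁅X,Y⁆` and
`X∗Y = ⁅R X, Y⁆ − ⁅X, Rᵗ Y⁆ + Rᵗ ⁅X,Y⁆`, one has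
`κ (X∗Y) Z = − κ Y ⁅X,Z⁆₁` for all `X Y Z`, i.e. `∗` is the coadjoint action
of `(g, ⁅·,·⁆₁)` on `(g, ⁅·,·⁆)`. -/
theorem stmt13 {K g : Type*} [Field K] [LieRing g] [LieAlgebra K g]
    (κ : g →ₗ[K] g →ₗ[K] K)
    (hsymm : ∀ a b : g, κ a b = κ b a)
    (hnd : ∀ a : g, (∀ b : g, κ a b = 0) → a = 0)
    (hinv : ∀ a b c : g, κ ⁅a, b⁆ c = κ a ⁅b, c⁆)
    (R Rt : g →ₗ[K] g)
    (hadj : ∀ x y : g, κ (R x) y = κ x (Rt y)) :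
    ∀ X Y Z : g,
      κ (⁅R X, Y⁆ - ⁅X, Rt Y⁆ + Rt ⁅X, Y⁆) Z
        = - κ Y (⁅R X, Z⁆ + ⁅X, R Z⁆ - R ⁅X, Z⁆) := by
  exact stmt13_general (lieInvariant_of_apply_lie_left_eq hinv)
    (isAdjointPair_swap_of_isSymm ⟨hsymm⟩ hadj) R
end

section
/- (Steklov–Lyapunov integrable case) Let p, q, r ∈ ℝ. Define polynomials in the variables (M₁, M₂, M₃, γ₁, γ₂, γ₃): H₁ = M₁² + M₂² + M₃² + pM₁γ₁ + qM₂γ₂ + rM₃γ₃ + ¼(q−r)²γ₁² + ¼(p−r)²γ₂² + ¼(p−q)²γ₃², and H₂ = pM₁² + qM₂² + rM₃² + p(q+r)M₁γ₁ + q(p+r)M₂γ₂ + r(p+q)M₃γ₃ + ¼p(q+r)²γ₁² + ¼q(p+r)²γ₂² + ¼r(p+q)²γ₃². Then {H₁, H₂} = 0, where {·,·} is the e(3) Poisson bracket. -/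
open MvPolynomial

/-- The Levi-Civita symbol `ε_{ijk}` on three indices, with `ε₁₂₃ = 1`. -/
def levyCivita (i j k : Fin 3) : ℝ :=
  if (i, j, k) = (0, 1, 2) ∨ (i, j, k) = (1, 2, 0) ∨ (i, j, k) = (2, 0, 1) then 1
  else if (i, j, k) = (0, 2, 1) ∨ (i, j, k) = (2, 1, 0) ∨ (i, j, k) = (1, 0, 2) then -1
  else 0

/-- The variable `Mᵢ` as a polynomial in `(M₁,M₂,M₃,γ₁,γ₂,γ₃)`. -/
noncomputable def Mv (i : Fin 3) : MvPolynomial (Fin 3 ⊕ Fin 3) ℝ := X (Sum.inl i)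

/-- The variable `γᵢ` as a polynomial in `(M₁,M₂,M₃,γ₁,γ₂,γ₃)`. -/
noncomputable def Gv (i : Fin 3) : MvPolynomial (Fin 3 ⊕ Fin 3) ℝ := X (Sum.inr i)

/-- The Poisson bracket of the Lie algebra `e(3)`:
`{F,G} = Σ_{i,j,k} ε_{ijk} (Mₖ ∂F/∂Mᵢ ∂G/∂Mⱼ + γₖ (∂F/∂Mᵢ ∂G/∂γⱼ + ∂F/∂γᵢ ∂G/∂Mⱼ))`. -/
noncomputable def e3Bracket (F G : MvPolynomial (Fin 3 ⊕ Fin 3) ℝ) :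
    MvPolynomial (Fin 3 ⊕ Fin 3) ℝ :=
  ∑ i : Fin 3, ∑ j : Fin 3, ∑ k : Fin 3,
    C (levyCivita i j k) *
      (Mv k * (pderiv (Sum.inl i) F) * (pderiv (Sum.inl j) G)
        + Gv k * ((pderiv (Sum.inl i) F) * (pderiv (Sum.inr j) G)
            + (pderiv (Sum.inr i) F) * (pderiv (Sum.inl j) G)))

/-!
Write `p₁, p₂, p₃` for `p, q, r`, let `2dᵢ` be the sum of the two `pⱼ` with `j ≠ i`, and put
`z = M + dγ` with componentwise products. Then `H₂ = ∑ pᵢ zᵢ²`. Replacing every `pᵢ` by `pᵢ - s`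
turns `H₂` into `∑ (pᵢ - s)(zᵢ - s γᵢ)²`, whose coefficient of `-s` is
`K = ∑ (zᵢ² + 2 pᵢ zᵢ γᵢ)`; this is `H₁` up to the Casimir functions `M · γ` and `γ · γ`.

The gradients satisfy `∂K/∂γ = d ∂K/∂M + ∂H₂/∂M` and `∂H₂/∂γ = d ∂H₂/∂M`, which collapses the
bracket `{K, H₂}` to the triple product of `M + (d₁ + d₂ + d₃ - d)γ`, `∂K/∂M` and `∂H₂/∂M`. Since
`d₁ + d₂ + d₃ - d = d + p`, the first of these vectors is half of the second.
-/

section CrossProduct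

open scoped Matrix

lemma mul_cross_add_cross_mul {R : Type*} [CommRing R] (d v w : Fin 3 → R) :
    (d * v) ⨯₃ w + v ⨯₃ (d * w) = (fun k ↦ (∑ j, d j) - d k) * (v ⨯₃ w) := by
  ext k
  fin_cases k <;>
    simp only [cross_apply, Fin.sum_univ_three, Fin.zero_eta, Fin.mk_one, Fin.reduceFinMk,
      Pi.add_apply, Pi.mul_apply, Matrix.cons_val] <;>
    ring

lemma sum_C_levyCivita_mul {σ : Type*} (u v w : Fin 3 → MvPolynomial σ ℝ) :
    ∑ i, ∑ j, ∑ k, C (levyCivita i j k) * (w k * u i * v j) = w ⬝ᵥ u ⨯₃ v := by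
  rw [cross_apply, Matrix.vec3_dotProduct]
  simp only [levyCivita, Fin.sum_univ_three, Prod.mk.injEq, Fin.reduceEq, zero_ne_one, one_ne_zero,
    and_false, and_true, or_false, false_or, ↓reduceIte, C_0, C_1, C_neg, zero_mul, one_mul,
    neg_mul, zero_add, add_zero, Matrix.cons_val]
  ring

end CrossProduct

section Bracket

open scoped Matrix

/-- The gradient `∂F/∂M` of a polynomial function on `e(3)*`, as an `ℝ`-linear map in `F`. -/
noncomputable def gradM :
    MvPolynomial (Fin 3 ⊕ Fin 3) ℝ →ₗ[ℝ] Fin 3 → MvPolynomial (Fin 3 ⊕ Fin 3) ℝ :=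
  LinearMap.pi fun i ↦ (pderiv (Sum.inl i)).toLinearMap

/-- The gradient `∂F/∂γ` of a polynomial function on `e(3)*`, as an `ℝ`-linear map in `F`. -/
noncomputable def gradG :
    MvPolynomial (Fin 3 ⊕ Fin 3) ℝ →ₗ[ℝ] Fin 3 → MvPolynomial (Fin 3 ⊕ Fin 3) ℝ :=
  LinearMap.pi fun i ↦ (pderiv (Sum.inr i)).toLinearMap

lemma gradM_apply (F : MvPolynomial (Fin 3 ⊕ Fin 3) ℝ) (i : Fin 3) :
    gradM F i = pderiv (Sum.inl i) F := rfl

lemma gradG_apply (F : MvPolynomial (Fin 3 ⊕ Fin 3) ℝ) (i : Fin 3) :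
    gradG F i = pderiv (Sum.inr i) F := rfl

lemma pderiv_inl_Mv (i j : Fin 3) : pderiv (Sum.inl i) (Mv j) = if i = j then 1 else 0 := by
  simp [Mv, pderiv_X, Pi.single_apply, eq_comm]

lemma pderiv_inr_Mv (i j : Fin 3) : pderiv (Sum.inr i) (Mv j) = 0 := by
  simp [Mv, pderiv_X]

lemma pderiv_inl_Gv (i j : Fin 3) : pderiv (Sum.inl i) (Gv j) = 0 := by
  simp [Gv, pderiv_X]

lemma pderiv_inr_Gv (i j : Fin 3) : pderiv (Sum.inr i) (Gv j) = if i = j then 1 else 0 := by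
  simp [Gv, pderiv_X, Pi.single_apply, eq_comm]

lemma e3Bracket_eq_dotProduct_cross (F G : MvPolynomial (Fin 3 ⊕ Fin 3) ℝ) :
    e3Bracket F G = Mv ⬝ᵥ gradM F ⨯₃ gradM G
      + Gv ⬝ᵥ (gradM F ⨯₃ gradG G + gradG F ⨯₃ gradM G) := by
  simp only [e3Bracket, dotProduct_add, ← sum_C_levyCivita_mul, ← Finset.sum_add_distrib,
    gradM_apply, gradG_apply]
  congr! 3
  ring

lemma e3Bracket_sub_left (F₁ F₂ G : MvPolynomial (Fin 3 ⊕ Fin 3) ℝ) :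
    e3Bracket (F₁ - F₂) G = e3Bracket F₁ G - e3Bracket F₂ G := by
  simp only [e3Bracket_eq_dotProduct_cross, map_sub, LinearMap.sub_apply, dotProduct_add,
    dotProduct_sub]
  ring

lemma e3Bracket_C_mul_left (c : ℝ) (F G : MvPolynomial (Fin 3 ⊕ Fin 3) ℝ) :
    e3Bracket (C c * F) G = C c * e3Bracket F G := by
  simp only [e3Bracket, pderiv_C_mul, Finset.mul_sum]
  congr! 3
  ring

lemma gradM_dotProduct_Mv_Gv : gradM (Mv ⬝ᵥ Gv) = Gv := by
  ext1 i
  simp [gradM_apply, dotProduct, pderiv_inl_Mv, pderiv_inl_Gv]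

lemma gradG_dotProduct_Mv_Gv : gradG (Mv ⬝ᵥ Gv) = Mv := by
  ext1 i
  simp [gradG_apply, dotProduct, pderiv_inr_Mv, pderiv_inr_Gv]

lemma gradM_dotProduct_Gv_Gv : gradM (Gv ⬝ᵥ Gv) = 0 := by
  ext1 i
  simp [gradM_apply, dotProduct, pderiv_inl_Gv]

lemma gradG_dotProduct_Gv_Gv : gradG (Gv ⬝ᵥ Gv) = (2 : ℝ) • Gv := by
  ext1 i
  simp [gradG_apply, dotProduct, pderiv_inr_Gv, two_smul, Finset.sum_add_distrib]

lemma e3Bracket_dotProduct_Mv_Gv_left (F : MvPolynomial (Fin 3 ⊕ Fin 3) ℝ) :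
    e3Bracket (Mv ⬝ᵥ Gv) F = 0 := by
  rw [e3Bracket_eq_dotProduct_cross, gradM_dotProduct_Mv_Gv, gradG_dotProduct_Mv_Gv,
    dotProduct_add, dot_self_cross, zero_add, triple_product_permutation Gv,
    ← cross_anticomm, dotProduct_neg, neg_add_cancel]

lemma e3Bracket_dotProduct_Gv_Gv_left (F : MvPolynomial (Fin 3 ⊕ Fin 3) ℝ) :
    e3Bracket (Gv ⬝ᵥ Gv) F = 0 := by
  simp [e3Bracket_eq_dotProduct_cross, gradM_dotProduct_Gv_Gv, gradG_dotProduct_Gv_Gv]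

lemma e3Bracket_eq_of_gradG_eq {F G : MvPolynomial (Fin 3 ⊕ Fin 3) ℝ}
    {d : Fin 3 → MvPolynomial (Fin 3 ⊕ Fin 3) ℝ}
    (hF : gradG F = d * gradM F + gradM G) (hG : gradG G = d * gradM G) :
    e3Bracket F G = (Mv + (fun k ↦ (∑ j, d j) - d k) * Gv) ⬝ᵥ gradM F ⨯₃ gradM G := by
  have hcross : gradM F ⨯₃ gradG G + gradG F ⨯₃ gradM G
      = (fun k ↦ (∑ j, d j) - d k) * (gradM F ⨯₃ gradM G) := by
    rw [hF, hG, map_add, LinearMap.add_apply, cross_self, add_zero, add_comm,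
      mul_cross_add_cross_mul]
  rw [e3Bracket_eq_dotProduct_cross, hcross, add_dotProduct]
  simp only [dotProduct, Pi.mul_apply]
  congr! 2
  ring

end Bracket

section SteklovLyapunov

open scoped Matrix

/-- The shifted momentum `z = M + dγ`, with componentwise product; it completes the squares in
`H₂`. -/
noncomputable def shiftedM (d : Fin 3 → ℝ) (i : Fin 3) : MvPolynomial (Fin 3 ⊕ Fin 3) ℝ :=
  Mv i + C (d i) * Gv i

/-- The quadratic form `∑ aᵢ zᵢ²` in the shifted momentum `z = M + dγ`, of which `H₂` is an
instance. -/
noncomputable def steklovForm (a d : Fin 3 → ℝ) : MvPolynomial (Fin 3 ⊕ Fin 3) ℝ :=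
  ∑ i, C (a i) * shiftedM d i ^ 2

/-- The quadratic form `∑ (zᵢ² + 2 aᵢ zᵢ γᵢ)`: the coefficient of `-s` in
`∑ (aᵢ - s) (zᵢ - s γᵢ)²`, where `z = M + dγ`. It represents
`H₁` modulo Casimir functions. -/
noncomputable def lyapunovForm (a d : Fin 3 → ℝ) : MvPolynomial (Fin 3 ⊕ Fin 3) ℝ :=
  ∑ i, (shiftedM d i ^ 2 + C (2 * a i) * (shiftedM d i * Gv i))

variable (a d : Fin 3 → ℝ)

lemma pderiv_inl_shiftedM (i j : Fin 3) :
    pderiv (Sum.inl i) (shiftedM d j) = if i = j then 1 else 0 := by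
  simp [shiftedM, pderiv_inl_Mv, pderiv_inl_Gv]

lemma pderiv_inr_shiftedM (i j : Fin 3) :
    pderiv (Sum.inr i) (shiftedM d j) = if i = j then C (d j) else 0 := by
  simp [shiftedM, pderiv_inr_Mv, pderiv_inr_Gv]

lemma gradM_steklovForm (i : Fin 3) :
    gradM (steklovForm a d) i = 2 * C (a i) * shiftedM d i := by
  simp only [gradM_apply, steklovForm, sq, map_sum, pderiv_C, pderiv_mul,
    pderiv_inl_shiftedM, mul_add, mul_ite, ite_mul, mul_one, one_mul, mul_zero, zero_mul,
    Finset.sum_add_distrib, Finset.sum_ite_eq, Finset.mem_univ, if_true]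
  ring

lemma gradG_steklovForm : gradG (steklovForm a d) = C ∘ d * gradM (steklovForm a d) := by
  ext1 i
  rw [Pi.mul_apply, gradM_steklovForm]
  simp only [gradG_apply, steklovForm, sq, map_sum, pderiv_C, pderiv_mul,
    pderiv_inr_shiftedM, mul_add, mul_ite, ite_mul, mul_zero, zero_mul,
    Finset.sum_add_distrib, Finset.sum_ite_eq, Finset.mem_univ, if_true, Function.comp_apply]
  ring

lemma gradM_lyapunovForm (i : Fin 3) :
    gradM (lyapunovForm a d) i = 2 * (shiftedM d i + C (a i) * Gv i) := by
  simp only [gradM_apply, lyapunovForm, sq, map_sum, map_add, pderiv_C, pderiv_mul,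
    pderiv_inl_shiftedM, pderiv_inl_Gv, mul_add, mul_ite, ite_mul, mul_one, one_mul, mul_zero,
    zero_mul, Finset.sum_add_distrib, Finset.sum_ite_eq, Finset.mem_univ, if_true, add_zero]
  rw [C_mul, map_ofNat]
  ring

lemma gradG_lyapunovForm :
    gradG (lyapunovForm a d) = C ∘ d * gradM (lyapunovForm a d) + gradM (steklovForm a d) := by
  ext1 i
  rw [Pi.add_apply, Pi.mul_apply, gradM_lyapunovForm, gradM_steklovForm]
  simp only [gradG_apply, lyapunovForm, sq, map_sum, map_add, pderiv_C, pderiv_mul,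
    pderiv_inr_shiftedM, pderiv_inr_Gv, mul_add, mul_ite, ite_mul, mul_one, mul_zero,
    zero_mul, Finset.sum_add_distrib, Finset.sum_ite_eq, Finset.mem_univ, if_true,
    Function.comp_apply]
  rw [C_mul, map_ofNat]
  ring

variable {a d}

theorem e3Bracket_lyapunovForm_steklovForm (h : ∀ k, ∑ j, d j = 2 * d k + a k) :
    e3Bracket (lyapunovForm a d) (steklovForm a d) = 0 := by
  have hgrad : gradM (lyapunovForm a d)
      = (2 : MvPolynomial (Fin 3 ⊕ Fin 3) ℝ) •
        (Mv + (fun k ↦ (∑ j, (C ∘ d) j) - (C ∘ d) k) * Gv) := by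
    ext1 k
    have hk : ∑ j, (C (d j) : MvPolynomial (Fin 3 ⊕ Fin 3) ℝ) = 2 * C (d k) + C (a k) := by
      rw [← map_sum, h k, C_add, C_mul, map_ofNat]
    simp only [gradM_lyapunovForm, shiftedM, Pi.smul_apply, Pi.add_apply, Pi.mul_apply,
      Function.comp_apply, hk, smul_eq_mul]
    ring
  rw [e3Bracket_eq_of_gradG_eq (gradG_lyapunovForm a d) (gradG_steklovForm a d), hgrad,
    map_smul, LinearMap.smul_apply, dotProduct_smul, dot_self_cross, smul_zero]

theorem e3Bracket_lyapunovForm_sub_casimirs_steklovForm (h : ∀ k, ∑ j, d j = 2 * d k + a k)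
    (s t : ℝ) :
    e3Bracket (lyapunovForm a d - C s * Mv ⬝ᵥ Gv - C t * Gv ⬝ᵥ Gv) (steklovForm a d) = 0 := by
  simp only [e3Bracket_sub_left, e3Bracket_C_mul_left, e3Bracket_lyapunovForm_steklovForm h,
    e3Bracket_dotProduct_Mv_Gv_left, e3Bracket_dotProduct_Gv_Gv_left, mul_zero, sub_zero]

end SteklovLyapunov

/-- Steklov–Lyapunov integrable case: the quadratic Hamiltonians
`H₁` and `H₂` of the Steklov–Lyapunov top commute with respect to the `e(3)`
Poisson bracket. -/
theorem stmt14 (p q r : ℝ) :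
    e3Bracket
      (Mv 0 ^ 2 + Mv 1 ^ 2 + Mv 2 ^ 2
        + C p * Mv 0 * Gv 0 + C q * Mv 1 * Gv 1 + C r * Mv 2 * Gv 2
        + C ((q - r) ^ 2 / 4) * Gv 0 ^ 2 + C ((p - r) ^ 2 / 4) * Gv 1 ^ 2
        + C ((p - q) ^ 2 / 4) * Gv 2 ^ 2)
      (C p * Mv 0 ^ 2 + C q * Mv 1 ^ 2 + C r * Mv 2 ^ 2
        + C (p * (q + r)) * Mv 0 * Gv 0 + C (q * (p + r)) * Mv 1 * Gv 1
        + C (r * (p + q)) * Mv 2 * Gv 2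
        + C (p * (q + r) ^ 2 / 4) * Gv 0 ^ 2 + C (q * (p + r) ^ 2 / 4) * Gv 1 ^ 2
        + C (r * (p + q) ^ 2 / 4) * Gv 2 ^ 2) = 0 := by
  have hshift (k : Fin 3) : ∑ j, ![(q + r) / 2, (p + r) / 2, (p + q) / 2] j
      = 2 * ![(q + r) / 2, (p + r) / 2, (p + q) / 2] k + ![p, q, r] k := by
    fin_cases k <;>
      simp only [Fin.sum_univ_three, Fin.zero_eta, Fin.mk_one, Fin.reduceFinMk,
        Matrix.cons_val] <;>
      ring
  convert e3Bracket_lyapunovForm_sub_casimirs_steklovForm hshift (p + q + r)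
    (p * q + p * r + q * r) using 2
  · refine MvPolynomial.funext fun x ↦ ?_
    simp only [lyapunovForm, shiftedM, dotProduct, Fin.sum_univ_three, Matrix.cons_val, map_add,
      map_sub, map_mul, map_pow, eval_C]
    ring
  · refine MvPolynomial.funext fun x ↦ ?_
    simp only [steklovForm, shiftedM, Fin.sum_univ_three, Matrix.cons_val, map_add, map_mul,
      map_pow, eval_C]
    ring
end

section
/- (so(n) generalization of the Steklov–Lyapunov top: conjugated Lax representation) Let R be an associative unital algebra over a commutative ring, and let M, Γ, V, M', Γ' ∈ R. Then the identity λ⁻²M' + λ⁻¹Γ' = (1 + λV)·(λ⁻¹M)·(λ⁻²M + λ⁻¹Γ) − (λ⁻²M + λ⁻¹Γ)·(λ⁻¹M)·(1 + λV) holds in the Laurent polynomial ring R[λ, λ⁻¹] if and only if M' = [V, M²] + [M, Γ] and Γ' = VMΓ − ΓMV, where [a,b] = ab − ba. (This identity is the Lax equation L_t = [A, L] with L = (1+λV)^{−1/2}(λ⁻²M + λ⁻¹Γ)(1+λV)^{−1/2} and A = (1+λV)^{1/2}(λ⁻¹M)(1+λV)^{1/2}, conjugated by (1+λV)^{1/2}.)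 -/
/-!
Multiplying `L_t = [A, L]` by `(1 + λV)^{1/2}` on both sides leaves no square roots: with
`P = λ⁻²M + λ⁻¹Γ` and `Q = λ⁻¹M` the right-hand side becomes `(1 + λV)QP − PQ(1 + λV)`, which is
`[Q, P] + λ(VQP − PQV)`. The leading term `λ⁻³[M, M]` of `[Q, P]` vanishes, so the whole expression
has only the degrees `-2` and `-1` of the left-hand side, and comparing coefficients gives the
equations of motion.
-/

open LaurentPolynomial

section TwistedCommutator

/-- The commutator of `a` and `l` twisted by `g`, namely `g a l - l a g`. It is the right-hand side
of a Lax equation after conjugation: if `g = s²` with `s` invertible, then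
`s [s a s, s⁻¹ l s⁻¹] s = g a l - l a g`. -/
def twistedCommutator {A : Type*} [NonUnitalNonAssocRing A] (g a l : A) : A :=
  g * a * l - l * a * g

theorem twistedCommutator_one {A : Type*} [NonAssocRing A] (a l : A) :
    twistedCommutator 1 a l = ⁅a, l⁆ := by
  rw [twistedCommutator, Ring.lie_def, one_mul, mul_one]

theorem twistedCommutator_add_left {A : Type*} [NonUnitalNonAssocRing A] (g g' a l : A) :
    twistedCommutator (g + g') a l = twistedCommutator g a l + twistedCommutator g' a l := by
  simp only [twistedCommutator, add_mul, mul_add]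
  abel

theorem twistedCommutator_add_right {A : Type*} [NonUnitalNonAssocRing A] (g a l l' : A) :
    twistedCommutator g a (l + l') = twistedCommutator g a l + twistedCommutator g a l' := by
  simp only [twistedCommutator, add_mul, mul_add]
  abel

theorem twistedCommutator_self {A : Type*} [Ring A] (g a : A) :
    twistedCommutator g a a = ⁅g, a ^ 2⁆ := by
  rw [twistedCommutator, Ring.lie_def, sq, mul_assoc]

end TwistedCommutator

section Semiring

variable {R : Type*} [Semiring R]

theorem coeff_C_mul_T (a : R) (n k : ℤ) :
    (C a * T n : R[T;T⁻¹]).coeff k = if n = k then a else 0 := by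
  rw [← single_eq_C_mul_T, AddMonoidAlgebra.coeff_single, Finsupp.single_apply]

theorem T_mul_C_add_T_mul_C_inj {m n : ℤ} (hmn : m ≠ n) {a b c d : R} :
    (T m * C a + T n * C b : R[T;T⁻¹]) = T m * C c + T n * C d ↔ a = c ∧ b = d := by
  refine ⟨fun h ↦ ⟨?_, ?_⟩, fun ⟨hac, hbd⟩ ↦ by rw [hac, hbd]⟩
  · simpa [coeff_C_mul_T, hmn.symm] using congrArg (fun p ↦ p.coeff m) h
  · simpa [coeff_C_mul_T, hmn] using congrArg (fun p ↦ p.coeff n) h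

/-- The conjugated Lax matrix `(1 + λV)^{1/2} L (1 + λV)^{1/2} = λ⁻²M + λ⁻¹Γ` of the
Steklov–Lyapunov top, with `λ` encoded as `T 1`. -/
noncomputable def conjugatedLax (M Γ : R) : R[T;T⁻¹] :=
  T (-2) * C M + T (-1) * C Γ

theorem conjugatedLax_inj {M Γ M' Γ' : R} :
    conjugatedLax M Γ = conjugatedLax M' Γ' ↔ M = M' ∧ Γ = Γ' :=
  T_mul_C_add_T_mul_C_inj (by decide)

theorem T_mul_C_mul_T_mul_C (m n : ℤ) (a b : R) :
    (T m * C a * (T n * C b) : R[T;T⁻¹]) = T (m + n) * C (a * b) := by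
  rw [mul_assoc, ← mul_assoc (C a), ← T_mul, T_add, map_mul]
  simp only [mul_assoc]

end Semiring

section Ring

variable {R : Type*} [Ring R]

theorem lie_T_mul_C (m n : ℤ) (a b : R) :
    ⁅(T m * C a : R[T;T⁻¹]), T n * C b⁆ = T (m + n) * C ⁅a, b⁆ := by
  rw [Ring.lie_def, T_mul_C_mul_T_mul_C, T_mul_C_mul_T_mul_C, add_comm n m, ← mul_sub, ← map_sub,
    Ring.lie_def]

theorem twistedCommutator_T_mul_C (i j k : ℤ) (g a l : R) :
    twistedCommutator (T i * C g : R[T;T⁻¹]) (T j * C a) (T k * C l)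
      = T (i + j + k) * C (twistedCommutator g a l) := by
  have degree_reverse : k + j + i = i + j + k := by ring
  simp only [twistedCommutator, T_mul_C_mul_T_mul_C, degree_reverse, map_sub, mul_sub]

theorem twistedCommutator_one_conjugatedLax (M Γ : R) :
    twistedCommutator 1 (T (-1) * C M) (conjugatedLax M Γ) = T (-2) * C ⁅M, Γ⁆ := by
  have leading_term : ⁅(T (-1) * C M : R[T;T⁻¹]), T (-2) * C M⁆ = 0 := by
    rw [lie_T_mul_C, (Commute.refl M).lie_eq, map_zero, mul_zero]
  rw [conjugatedLax, twistedCommutator_add_right, twistedCommutator_one, twistedCommutator_one,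
    leading_term, zero_add, lie_T_mul_C]
  norm_num

theorem twistedCommutator_T_one_mul_C_conjugatedLax (M Γ V : R) :
    twistedCommutator (T 1 * C V) (T (-1) * C M) (conjugatedLax M Γ)
      = conjugatedLax ⁅V, M ^ 2⁆ (twistedCommutator V M Γ) := by
  rw [conjugatedLax, twistedCommutator_add_right, twistedCommutator_T_mul_C,
    twistedCommutator_T_mul_C, twistedCommutator_self, conjugatedLax]
  norm_num

theorem twistedCommutator_one_add_T_one_mul_C_conjugatedLax (M Γ V : R) :
    twistedCommutator (1 + T 1 * C V) (T (-1) * C M) (conjugatedLax M Γ)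
      = conjugatedLax (⁅V, M ^ 2⁆ + ⁅M, Γ⁆) (twistedCommutator V M Γ) := by
  rw [twistedCommutator_add_left, twistedCommutator_one_conjugatedLax,
    twistedCommutator_T_one_mul_C_conjugatedLax, conjugatedLax, conjugatedLax, map_add, mul_add]
  abel

end Ring

/-- so(n) generalization of the Steklov–Lyapunov top, conjugated
Lax representation: in the Laurent polynomial ring `R[λ, λ⁻¹]` over an
associative unital algebra `R`, the identity
`λ⁻²M' + λ⁻¹Γ' = (1 + λV)(λ⁻¹M)(λ⁻²M + λ⁻¹Γ) − (λ⁻²M + λ⁻¹Γ)(λ⁻¹M)(1 + λV)`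
holds iff `M' = [V, M²] + [M, Γ]` and `Γ' = VMΓ − ΓMV`. -/
theorem stmt17 {S R : Type*} [CommRing S] [Ring R] [Algebra S R]
    (M Γ V M' Γ' : R) :
    (T (-2) * LaurentPolynomial.C M' + T (-1) * LaurentPolynomial.C Γ'
      = (1 + T 1 * LaurentPolynomial.C V)
          * (T (-1) * LaurentPolynomial.C M)
          * (T (-2) * LaurentPolynomial.C M + T (-1) * LaurentPolynomial.C Γ)
        - (T (-2) * LaurentPolynomial.C M + T (-1) * LaurentPolynomial.C Γ)
          * (T (-1) * LaurentPolynomial.C M)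
          * (1 + T 1 * LaurentPolynomial.C V))
    ↔ (M' = (V * M ^ 2 - M ^ 2 * V) + (M * Γ - Γ * M)
        ∧ Γ' = V * M * Γ - Γ * M * V) := by
  change conjugatedLax M' Γ' =
      twistedCommutator (1 + T 1 * C V) (T (-1) * C M) (conjugatedLax M Γ) ↔
    M' = ⁅V, M ^ 2⁆ + ⁅M, Γ⁆ ∧ Γ' = twistedCommutator V M Γ
  rw [twistedCommutator_one_add_T_one_mul_C_conjugatedLax]
  exact conjugatedLax_inj
end

section
/- (Reductions of system (5.6)) Let u, v, w, r be n×n matrices over a commutative ring, and define u' = uwr − rwu, v' = [u, w] + vwr − rwv, w' = [w, wr + rw − v], where [a,b] = ab − ba. Then: (i) if rᵀ = r, uᵀ = −u, vᵀ = −v and wᵀ = −w, then (u')ᵀ = −u', (v')ᵀ = −v' and (w')ᵀ = −w' (the skew-symmetric reduction is preserved); and (ii) if rᵀ = −r, vᵀ = −v, uᵀ = u and wᵀ = w, then (u')ᵀ = u', (w')ᵀ = w' and (v')ᵀ = −v' (the mixed symmetric/skew-symmetric reduction is preserved). -/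
open Matrix

/-!
Transposition reverses products, so if `x`, `y`, `z` are each preserved up to a sign, then so are
`x * y - y * x` and `x * y * z - z * y * x`, with *minus* the product of the signs. Both reductions
are one sign pattern: `u` and `w` have sign `ε`, `r` has sign `-ε` and `v` has sign `-1`, where
`ε = -1` in the skew-symmetric reduction and `ε = 1` in the mixed one. Since `ε * ε = 1`, the
right-hand sides `u'`, `v'`, `w'` have the signs of `u`, `v`, `w`.
-/

section AntiEndomorphism

variable {A : Type*} [NonUnitalRing A] {φ : A →+ A}

theorem map_mul_of_map_eq_smul (hφ : ∀ x y, φ (x * y) = φ y * φ x) {α β : ℤˣ} {x y : A}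
    (hx : φ x = α • x) (hy : φ y = β • y) : φ (x * y) = (α * β) • (y * x) := by
  rw [hφ, hx, hy, smul_mul_smul_comm, mul_comm β α]

theorem map_commutator_of_map_eq_smul (hφ : ∀ x y, φ (x * y) = φ y * φ x) {α β : ℤˣ} {x y : A}
    (hx : φ x = α • x) (hy : φ y = β • y) :
    φ (x * y - y * x) = -(α * β) • (x * y - y * x) := by
  rw [map_sub, map_mul_of_map_eq_smul hφ hx hy, map_mul_of_map_eq_smul hφ hy hx, mul_comm β α,
    ← smul_sub, Units.neg_smul, ← smul_neg, neg_sub]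

theorem map_anticommutator_of_map_eq_smul (hφ : ∀ x y, φ (x * y) = φ y * φ x) {α β : ℤˣ}
    {x y : A} (hx : φ x = α • x) (hy : φ y = β • y) :
    φ (x * y + y * x) = (α * β) • (x * y + y * x) := by
  rw [map_add, map_mul_of_map_eq_smul hφ hx hy, map_mul_of_map_eq_smul hφ hy hx, mul_comm β α,
    ← smul_add, add_comm]

theorem map_mul_mul_of_map_eq_smul (hφ : ∀ x y, φ (x * y) = φ y * φ x) {α β γ : ℤˣ} {x y z : A}
    (hx : φ x = α • x) (hy : φ y = β • y) (hz : φ z = γ • z) :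
    φ (x * y * z) = (α * β * γ) • (z * y * x) := by
  rw [hφ, map_mul_of_map_eq_smul hφ hx hy, hz, smul_mul_smul_comm, mul_comm γ, mul_assoc z]

theorem map_tripleCommutator_of_map_eq_smul (hφ : ∀ x y, φ (x * y) = φ y * φ x) {α β γ : ℤˣ}
    {x y z : A} (hx : φ x = α • x) (hy : φ y = β • y) (hz : φ z = γ • z) :
    φ (x * y * z - z * y * x) = -(α * β * γ) • (x * y * z - z * y * x) := by
  have hsigns : γ * β * α = α * β * γ := by rw [mul_comm, mul_comm γ, mul_assoc]
  rw [map_sub, map_mul_mul_of_map_eq_smul hφ hx hy hz, map_mul_mul_of_map_eq_smul hφ hz hy hx,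
    hsigns, ← smul_sub, Units.neg_smul, ← smul_neg, neg_sub]

theorem stmt18_general (hφ : ∀ x y, φ (x * y) = φ y * φ x) (ε : ℤˣ) {u v w r : A}
    (hu : φ u = ε • u) (hv : φ v = -v) (hw : φ w = ε • w) (hr : φ r = -ε • r) :
    φ (u * w * r - r * w * u) = ε • (u * w * r - r * w * u)
      ∧ φ ((u * w - w * u) + v * w * r - r * w * v)
          = -((u * w - w * u) + v * w * r - r * w * v)
      ∧ φ (w * (w * r + r * w - v) - (w * r + r * w - v) * w)
          = ε • (w * (w * r + r * w - v) - (w * r + r * w - v) * w) := by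
  have hv_smul : φ v = (-1 : ℤˣ) • v := by rw [hv, Units.neg_smul, one_smul]
  refine ⟨?_, ?_, ?_⟩
  · simpa only [Int.units_mul_self, one_mul, neg_neg] using
      map_tripleCommutator_of_map_eq_smul hφ hu hw hr
  · have hcomm : φ (u * w - w * u) = -(u * w - w * u) := by
      simpa only [Int.units_mul_self, Units.neg_smul, one_smul] using
        map_commutator_of_map_eq_smul hφ hu hw
    have htriple : φ (v * w * r - r * w * v) = -(v * w * r - r * w * v) := by
      simpa only [neg_mul, mul_neg, one_mul, neg_neg, Int.units_mul_self, Units.neg_smul,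
        one_smul] using map_tripleCommutator_of_map_eq_smul hφ hv_smul hw hr
    rw [add_sub_assoc, map_add, hcomm, htriple, ← neg_add]
  · have hanti : φ (w * r + r * w) = (-1 : ℤˣ) • (w * r + r * w) := by
      simpa only [mul_neg, Int.units_mul_self] using map_anticommutator_of_map_eq_smul hφ hw hr
    have hsub : φ (w * r + r * w - v) = (-1 : ℤˣ) • (w * r + r * w - v) := by
      rw [map_sub, hanti, hv_smul, ← smul_sub]
    simpa only [mul_neg, mul_one, neg_neg] using map_commutator_of_map_eq_smul hφ hw hsub

end AntiEndomorphism

/-- Reductions of system (5.6): with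
`u' = uwr − rwu`, `v' = [u,w] + vwr − rwv`, `w' = [w, wr + rw − v]` for `n×n`
matrices over a commutative ring, (i) if `r` is symmetric and `u, v, w` are
skew-symmetric then `u', v', w'` are skew-symmetric, and (ii) if `r, v` are
skew-symmetric and `u, w` are symmetric then `u', w'` are symmetric and `v'`
is skew-symmetric. -/
theorem stmt18 {S : Type*} [CommRing S] {n : ℕ}
    (u v w r : Matrix (Fin n) (Fin n) S) :
    ((rᵀ = r ∧ uᵀ = -u ∧ vᵀ = -v ∧ wᵀ = -w) →
      ((u * w * r - r * w * u)ᵀ = -(u * w * r - r * w * u)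
        ∧ ((u * w - w * u) + v * w * r - r * w * v)ᵀ
            = -((u * w - w * u) + v * w * r - r * w * v)
        ∧ (w * (w * r + r * w - v) - (w * r + r * w - v) * w)ᵀ
            = -(w * (w * r + r * w - v) - (w * r + r * w - v) * w))) ∧
    ((rᵀ = -r ∧ vᵀ = -v ∧ uᵀ = u ∧ wᵀ = w) →
      ((u * w * r - r * w * u)ᵀ = u * w * r - r * w * u
        ∧ (w * (w * r + r * w - v) - (w * r + r * w - v) * w)ᵀ
            = w * (w * r + r * w - v) - (w * r + r * w - v) * w
        ∧ ((u * w - w * u) + v * w * r - r * w * v)ᵀ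
            = -((u * w - w * u) + v * w * r - r * w * v))) := by
  have reduction (ε : ℤˣ) := stmt18_general (u := u) (v := v) (w := w) (r := r)
    (φ := (transposeAddEquiv (Fin n) (Fin n) S).toAddMonoidHom) transpose_mul ε
  have skew := reduction (-1)
  have mixed := reduction 1
  simp only [Units.neg_smul, one_smul, neg_neg] at skew mixed
  refine ⟨fun ⟨hr, hu, hv, hw⟩ => skew hu hv hw hr, fun ⟨hr, hv, hu, hw⟩ => ?_⟩
  obtain ⟨hu', hv', hw'⟩ := mixed hu hv hw hr
  exact ⟨hu', hw', hv'⟩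
end
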